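/- For every integer a, ψ''(β^a R''_1) = 2^{2s} − 1 + 2^{3s}·ψ(ω^a D); consequently ψ''(β^a R''_1) = −2^{3s} + 2^{2s} − 1 if a mod M ∈ T_1, ψ''(β^a R''_1) = 2^{3s}(2^s − 1) + 2^{2s} − 1 if a mod M ∈ T_2, and ψ''(β^a R''_1) = −(2^s + 1)(2^{3s} − 2^s + 1) if a mod M ∈ T_3. -/

import Mathlib

noncomputable section

open scoped BigOperators

/-- `M = 2^{2s} + 2^s + 1`. -/
abbrev Mof (s : ℕ) : ℕ := 2 ^ (2 * s) + 2 ^ s + 1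

/-- The relative trace from `F` (of order `2^{3s}`) to its subfield `E` of order `2^s`:
`Tr_{F/E}(x) = x + x^{2^s} + x^{2^{2s}}`, viewed as a map `F → F`. -/
def trFE {F : Type*} [Field F] (s : ℕ) (x : F) : F :=
  x + x ^ (2 ^ s) + x ^ (2 ^ (2 * s))

/-- `ψ(x) = 1` if the absolute trace `Tr_{F/𝔽₂}(x) = 0`, and `-1` otherwise. -/
def psi (F : Type*) [Field F] [Algebra (ZMod 2) F] (x : F) : ℤ :=
  if Algebra.trace (ZMod 2) F x = 0 then 1 else -1

/-- `ψ(cS) = ∑_{x ∈ S} ψ(c·x)`. -/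
def psiSum (F : Type*) [Field F] [Algebra (ZMod 2) F] (c : F) (S : Set F) : ℤ :=
  ∑ᶠ x ∈ S, psi F (c * x)

/-- `D = {u ∈ F^× : Tr_{F/E}(u⁻¹) = 0}`. -/
def Dset (F : Type*) [Field F] (s : ℕ) : Set F :=
  {u | u ≠ 0 ∧ trFE s u⁻¹ = 0}

/-- `S_a = {u ∈ F^× : Tr_{F/E}(u^{2^s+1}) = 0 ∧ Tr_{F/E}(ω^a u) = 0}`. -/
def Sa {F : Type*} [Field F] (s : ℕ) (ω : F) (a : ℤ) : Set F :=
  {u | u ≠ 0 ∧ trFE s (u ^ (2 ^ s + 1)) = 0 ∧ trFE s (ω ^ a * u) = 0}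

/-- `T₁ ⊆ ℤ/Mℤ`: classes `a` with `|S_a| = 2^s - 1`. -/
def T1 {F : Type*} [Field F] (s : ℕ) (ω : F) : Set (ZMod (Mof s)) :=
  {x | (Sa s ω (x.val : ℤ)).ncard = 2 ^ s - 1}

/-- `T₂ ⊆ ℤ/Mℤ`: classes `a` with `|S_a| = 2(2^s - 1)`. -/
def T2 {F : Type*} [Field F] (s : ℕ) (ω : F) : Set (ZMod (Mof s)) :=
  {x | (Sa s ω (x.val : ℤ)).ncard = 2 * (2 ^ s - 1)}

/-- `T₃ ⊆ ℤ/Mℤ`: classes `a` with `|S_a| = 0`. -/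
def T3 {F : Type*} [Field F] (s : ℕ) (ω : F) : Set (ZMod (Mof s)) :=
  {x | (Sa s ω (x.val : ℤ)).ncard = 0}

/-- The cyclotomic class `C_i^{(M,K)} = {g^{i+Mt} : t ∈ ℤ}`. -/
def cyc {K : Type*} [Field K] (M : ℕ) (g : K) (i : ℤ) : Set K :=
  {x | ∃ t : ℤ, x = g ^ (i + (M : ℤ) * t)}

/-- `⋃_{i ∈ T} C_i^{(M,K)}` for a set `T ⊆ ℤ/Mℤ` of indices. -/
def Rclass {K : Type*} [Field K] (s : ℕ) (g : K) (T : Set (ZMod (Mof s))) : Set K :=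
  ⋃ i ∈ T, cyc (Mof s) g ((i.val : ℤ))

/-- The family `R_0 = {0}`, `R_k = ⋃_{i ∈ T_k} C_i^{(M,K)}`, `k = 1, 2, 3`. -/
def Rfam {F K : Type*} [Field F] [Field K] (s : ℕ) (ω : F) (g : K) : Fin 4 → Set K :=
  ![{0}, Rclass s g (T1 s ω), Rclass s g (T2 s ω), Rclass s g (T3 s ω)]

/-- Indicator `[P] = 1` if `P` holds, `0` otherwise. -/
def Ind (P : Prop) : ℤ := @ite ℤ P (Classical.propDecidable P) 1 0

/-!
Let `q = 2 ^ s` and `E ⊆ F ⊆ H`. Since `N_{H/F}(β) = ω`, the set `R''_1` consists of the nonzero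
`x ∈ H` with `Tr_{F/E} (N_{H/F} x) = 0`, as soon as `a mod M ∈ T_1` is known to mean
`Tr_{F/E} (ω ^ a) = 0`. That is plane geometry over `E`: `Tr_{F/E} (u ^ (q + 1))` is a ternary
quadratic form whose nonzero zeros are the elements of `D`, they form a conic with nucleus `E`, and
`|S_a| = q - 1` says that the line `Tr_{F/E} (ω ^ a * u) = 0` is tangent, that is, passes through
the nucleus.

By the Hasse–Davenport relation a sum of `φ (N x) * ψ (Tr x)` over `x ∈ H` equals a sum of
`φ (u * v * w) * ψ (u + v + w)` over `F ^ 3`. Detecting the condition on `u * v * w` by the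
additive characters of `E` and summing over `w`, then `v`, leaves the character sum over `D`.
That sum is in turn read off from `|S_a|`, because `D` is stable under `Eˣ`.

The Hasse–Davenport relation is proved by Newton's identity for the `L`-function of the completely
multiplicative weight `χ (∏ rᵢ) * ψ (∑ rᵢ)` on monic polynomials with roots `rᵢ`: this `L`-function
is a polynomial of degree one, since in degree at least two the second coefficient varies freely
without changing the constant one.
-/

section MonicPolynomials

open Polynomial UniqueFactorizationMonoid Finset

variable {F : Type*} [Field F]

section

variable [DecidableEq F]

open Classical in
/-- The von Mangoldt function of `F[X]`: the degree of `P` at a power `P ^ j`, `1 ≤ j`, of an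
irreducible `P`, and zero elsewhere. -/
def polyVonMangoldt (a : F[X]) : ℕ :=
  if IsPrimePow a then (radical a).natDegree else 0

theorem normalize_eq_of_mem_primeFactors {f P : F[X]} (hP : P ∈ primeFactors f) :
    normalize P = P :=
  normalize_normalized_factor P (mem_primeFactors.mp hP)

theorem monic_of_mem_primeFactors {f P : F[X]} (hP : P ∈ primeFactors f) : P.Monic := by
  have hP' := mem_primeFactors.mp hP
  rw [← normalize_eq_of_mem_primeFactors hP]
  exact monic_normalize (irreducible_of_normalized_factor P hP').ne_zero

theorem polyVonMangoldt_pow {f P : F[X]} (hP : P ∈ primeFactors f) {j : ℕ} (hj : j ≠ 0) :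
    polyVonMangoldt (P ^ j) = P.natDegree := by
  have hprime := prime_of_normalized_factor P (mem_primeFactors.mp hP)
  rw [polyVonMangoldt, if_pos (hprime.isPrimePow.pow hj), radical_pow_of_prime hprime hj,
    normalize_eq_of_mem_primeFactors hP]

theorem pow_dvd_iff_le_count_normalizedFactors {f P : F[X]} (hf : f ≠ 0)
    (hP : P ∈ primeFactors f) {j : ℕ} : P ^ j ∣ f ↔ j ≤ (normalizedFactors f).count P := by
  rw [pow_dvd_iff_le_emultiplicity, emultiplicity_eq_count_normalizedFactors
    (irreducible_of_normalized_factor P (mem_primeFactors.mp hP)) hf,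
    normalize_eq_of_mem_primeFactors hP, Nat.cast_le]

theorem exists_mem_primeFactors_of_isPrimePow {f a : F[X]} (ha : a.Monic) (hpow : IsPrimePow a)
    (hf : f ≠ 0) (hdvd : a ∣ f) : ∃ P ∈ primeFactors f, ∃ j, j ≠ 0 ∧ P ^ j = a := by
  obtain ⟨p, j, hp, hj, rfl⟩ := hpow
  obtain ⟨P, hP, hassoc⟩ :=
    exists_mem_normalizedFactors_of_dvd hf hp.irreducible ((dvd_pow_self p hj.ne').trans hdvd)
  refine ⟨P, mem_primeFactors.mpr hP, j, hj.ne', ?_⟩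
  exact eq_of_monic_of_associated ((monic_of_mem_primeFactors (mem_primeFactors.mpr hP)).pow j) ha
    (hassoc.symm.pow_pow)

theorem pow_inj_of_mem_primeFactors {f P Q : F[X]} (hP : P ∈ primeFactors f)
    (hQ : Q ∈ primeFactors f) {i j : ℕ} (hi : i ≠ 0) (hj : j ≠ 0) (h : P ^ i = Q ^ j) :
    P = Q ∧ i = j := by
  have hPprime := prime_of_normalized_factor P (mem_primeFactors.mp hP)
  have hQprime := prime_of_normalized_factor Q (mem_primeFactors.mp hQ)
  obtain rfl : P = Q := by
    rw [← normalize_eq_of_mem_primeFactors hP, ← normalize_eq_of_mem_primeFactors hQ,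
      ← radical_pow_of_prime hPprime hi, ← radical_pow_of_prime hQprime hj, h]
  exact ⟨rfl, pow_injective_of_not_isUnit hPprime.not_isUnit hPprime.ne_zero h⟩

theorem sum_count_mul_natDegree_primeFactors {f : F[X]} (hf : f.Monic) :
    ∑ P ∈ primeFactors f, (normalizedFactors f).count P * P.natDegree = f.natDegree := by
  have hfactors : ∀ P ∈ normalizedFactors f, P.Monic := fun P hP =>
    monic_of_mem_primeFactors (mem_primeFactors.mpr hP)
  have hprod : (normalizedFactors f).prod = f := by
    refine eq_of_monic_of_associated ?_ hf (prod_normalizedFactors hf.ne_zero)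
    simpa using monic_multiset_prod_of_monic _ id hfactors
  rw [← toFinset_normalizedFactors]
  conv_rhs => rw [← hprod, natDegree_multiset_prod_of_monic _ hfactors,
    Finset.sum_multiset_map_count]
  simp only [smul_eq_mul]

end

variable (F) in
theorem finite_setOf_monic_natDegree_eq [Finite F] (d : ℕ) :
    {f : F[X] | f.Monic ∧ f.natDegree = d}.Finite :=
  Set.finite_coe_iff.mp <| Finite.of_equiv (Fin d → F)
    ((monicEquivDegreeLT d).trans (degreeLTEquiv F d).toEquiv).symm

variable [Fintype F]

variable (F) in
/-- The set of monic polynomials of degree `d` over the finite field `F`. -/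
def monicsOfDegree (d : ℕ) : Finset F[X] :=
  (finite_setOf_monic_natDegree_eq F d).toFinset

theorem mem_monicsOfDegree {d : ℕ} {f : F[X]} :
    f ∈ monicsOfDegree F d ↔ f.Monic ∧ f.natDegree = d := by
  simp [monicsOfDegree]

variable (F) in
theorem monicsOfDegree_zero : monicsOfDegree F 0 = {1} := by
  ext f
  rw [mem_monicsOfDegree, mem_singleton]
  exact ⟨fun hf => hf.1.natDegree_eq_zero.mp hf.2, fun hf => by simp [hf]⟩

theorem sum_polyVonMangoldt_dvd [DecidableEq F] {d : ℕ} {f : F[X]} [DecidablePred (· ∣ f)]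
    (hf : f ∈ monicsOfDegree F d) :
    ∑ k ∈ range (d + 1), ∑ a ∈ monicsOfDegree F k with a ∣ f, polyVonMangoldt a = d := by
  obtain ⟨hmonic, rfl⟩ := mem_monicsOfDegree.mp hf
  have hcount : ∀ P ∈ primeFactors f, (normalizedFactors f).count P * P.natDegree =
      ∑ _j ∈ Icc 1 ((normalizedFactors f).count P), P.natDegree := fun P _ => by simp
  conv_rhs => rw [← sum_count_mul_natDegree_primeFactors hmonic, sum_congr rfl hcount]
  rw [Finset.sum_sigma', Finset.sum_sigma']
  refine (sum_of_injOn (fun Pj => ⟨(Pj.1 ^ Pj.2).natDegree, Pj.1 ^ Pj.2⟩) ?_ ?_ ?_ ?_).symm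
  · rintro ⟨P, i⟩ hPi ⟨Q, j⟩ hQj hpow
    simp only [coe_sigma, Set.mem_sigma_iff, mem_coe, mem_Icc] at hPi hQj
    obtain ⟨rfl, rfl⟩ := pow_inj_of_mem_primeFactors hPi.1 hQj.1
      (Nat.one_le_iff_ne_zero.mp hPi.2.1) (Nat.one_le_iff_ne_zero.mp hQj.2.1)
      (eq_of_heq (Sigma.mk.inj hpow).2)
    rfl
  · rintro ⟨P, j⟩ hPj
    simp only [coe_sigma, Set.mem_sigma_iff, mem_coe, mem_Icc, mem_range, mem_filter,
      mem_monicsOfDegree, and_true] at hPj ⊢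
    have hdvd := (pow_dvd_iff_le_count_normalizedFactors hmonic.ne_zero hPj.1).mpr hPj.2.2
    exact ⟨Nat.lt_succ_of_le (natDegree_le_of_dvd hdvd hmonic.ne_zero),
      (monic_of_mem_primeFactors hPj.1).pow _, hdvd⟩
  · rintro ⟨k, a⟩ ha hnot
    simp only [mem_sigma, mem_range, mem_filter, mem_monicsOfDegree] at ha
    refine if_neg fun hpow => hnot ?_
    obtain ⟨P, hP, j, hj, rfl⟩ :=
      exists_mem_primeFactors_of_isPrimePow ha.2.1.1 hpow hmonic.ne_zero ha.2.2
    obtain rfl := ha.2.1.2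
    exact ⟨⟨P, j⟩, mem_coe.mpr (mem_sigma.mpr ⟨hP, mem_Icc.mpr ⟨Nat.one_le_iff_ne_zero.mpr hj,
      (pow_dvd_iff_le_count_normalizedFactors hmonic.ne_zero hP).mp ha.2.2⟩⟩), rfl⟩
  · rintro ⟨P, j⟩ hPj
    obtain ⟨hP, hj⟩ := mem_sigma.mp hPj
    exact (polyVonMangoldt_pow hP (Nat.one_le_iff_ne_zero.mp (mem_Icc.mp hj).1)).symm

theorem sum_monicsOfDegree_dvd {R : Type*} [AddCommMonoid R] (w : F[X] → R) {a : F[X]}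
    [DecidablePred (a ∣ ·)] (ha : a.Monic) {m : ℕ} (hm : a.natDegree ≤ m) :
    ∑ f ∈ monicsOfDegree F m with a ∣ f, w f =
      ∑ b ∈ monicsOfDegree F (m - a.natDegree), w (a * b) := by
  refine (sum_nbij (a * ·) (fun b hb => ?_) (fun b _ c _ h => mul_left_cancel₀ ha.ne_zero h)
    ?_ fun _ _ => rfl).symm
  · obtain ⟨hb, hdeg⟩ := mem_monicsOfDegree.mp hb
    rw [mem_filter, mem_monicsOfDegree, ha.natDegree_mul hb, hdeg]
    exact ⟨⟨ha.mul hb, Nat.add_sub_cancel' hm⟩, dvd_mul_right a b⟩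
  · rintro f hf
    obtain ⟨hf, b, rfl⟩ := mem_filter.mp hf
    obtain ⟨hab, hdeg⟩ := mem_monicsOfDegree.mp hf
    have hb := ha.of_mul_monic_left hab
    rw [ha.natDegree_mul hb] at hdeg
    exact ⟨b, mem_monicsOfDegree.mpr ⟨hb, by lia⟩, rfl⟩

theorem natCast_mul_sum_monicsOfDegree [DecidableEq F] {R : Type*} [CommSemiring R] {w : F[X] → R}
    (hw : ∀ a b : F[X], a.Monic → b.Monic → w (a * b) = w a * w b) (m : ℕ) :
    (m : R) * ∑ f ∈ monicsOfDegree F m, w f = ∑ k ∈ range (m + 1),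
      (∑ a ∈ monicsOfDegree F k, polyVonMangoldt a * w a) *
        ∑ b ∈ monicsOfDegree F (m - k), w b := by
  classical
  calc (m : R) * ∑ f ∈ monicsOfDegree F m, w f
      = ∑ f ∈ monicsOfDegree F m, ∑ k ∈ range (m + 1),
          ∑ a ∈ monicsOfDegree F k with a ∣ f, polyVonMangoldt a * w f := by
        rw [mul_sum]
        refine sum_congr rfl fun f hf => ?_
        simp only [← sum_mul, ← Nat.cast_sum, sum_polyVonMangoldt_dvd hf]
    _ = ∑ k ∈ range (m + 1), ∑ a ∈ monicsOfDegree F k,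
          polyVonMangoldt a * ∑ f ∈ monicsOfDegree F m with a ∣ f, w f := by
        rw [sum_comm]
        refine sum_congr rfl fun k _ => ?_
        simp only [mul_sum, sum_filter, mul_ite, mul_zero]
        exact sum_comm
    _ = _ := by
        refine sum_congr rfl fun k hk => ?_
        rw [sum_mul]
        refine sum_congr rfl fun a ha => ?_
        obtain ⟨hmonic, rfl⟩ := mem_monicsOfDegree.mp ha
        rw [sum_monicsOfDegree_dvd w hmonic (Nat.le_of_lt_succ (mem_range.mp hk)), mul_assoc,
          mul_sum (a := w a)]
        exact congrArg _ (sum_congr rfl fun b hb => hw a b hmonic (mem_monicsOfDegree.mp hb).1)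

end MonicPolynomials

section GaussWeight

open Polynomial Finset

variable {F R : Type*} [Field F] [CommRing R] (χ : F →* R) (ψ : AddChar F R)

/-- The weight attached to a monic polynomial with roots `r₁, …, r_d`, namely
`χ (∏ rᵢ) * ψ (∑ rᵢ)`, which is completely multiplicative. -/
def gaussWeight (f : F[X]) : R :=
  χ ((-1) ^ f.natDegree * f.coeff 0) * ψ (-f.nextCoeff)

theorem gaussWeight_mul {f g : F[X]} (hf : f.Monic) (hg : g.Monic) :
    gaussWeight χ ψ (f * g) = gaussWeight χ ψ f * gaussWeight χ ψ g := by
  simp only [gaussWeight, hf.natDegree_mul hg, mul_coeff_zero, hf.nextCoeff_mul hg, neg_add,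
    AddChar.map_add_eq_mul, pow_add, map_mul]
  ring

theorem gaussWeight_one : gaussWeight χ ψ 1 = 1 := by
  simp [gaussWeight, nextCoeff]

theorem gaussWeight_X_sub_C (u : F) : gaussWeight χ ψ (X - C u) = χ u * ψ u := by
  simp [gaussWeight, nextCoeff_X_sub_C]

theorem gaussWeight_pow {f : F[X]} (hf : f.Monic) (n : ℕ) :
    gaussWeight χ ψ (f ^ n) = gaussWeight χ ψ f ^ n := by
  induction n with
  | zero => simp [gaussWeight_one]
  | succ n ih => rw [pow_succ, pow_succ, gaussWeight_mul χ ψ (hf.pow n) hf, ih]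

variable [Fintype F]

theorem sum_gaussWeight_one :
    ∑ f ∈ monicsOfDegree F 1, gaussWeight χ ψ f = ∑ u, χ u * ψ u := by
  refine (sum_nbij (fun u => X - C u) (fun u _ => ?_) (fun u _ v _ h => ?_) (fun f hf => ?_)
    fun u _ => (gaussWeight_X_sub_C χ ψ u).symm).symm
  · exact mem_monicsOfDegree.mpr ⟨monic_X_sub_C u, natDegree_X_sub_C u⟩
  · exact C_injective (sub_right_injective h)
  · obtain ⟨hf, hdeg⟩ := mem_monicsOfDegree.mp hf
    refine ⟨-f.coeff 0, mem_coe.mpr (mem_univ _), ?_⟩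
    simpa using (hf.eq_X_add_C hdeg).symm

theorem add_C_mul_X_pow_mem_monicsOfDegree {d : ℕ} (c : F) {f : F[X]}
    (hf : f ∈ monicsOfDegree F (d + 1)) : f + C c * X ^ d ∈ monicsOfDegree F (d + 1) := by
  obtain ⟨hf, hdeg⟩ := mem_monicsOfDegree.mp hf
  have hlt : (C c * X ^ d).degree < f.degree := by
    rw [degree_eq_natDegree hf.ne_zero, hdeg]
    exact (degree_C_mul_X_pow_le d c).trans_lt (by exact_mod_cast d.lt_succ_self)
  exact mem_monicsOfDegree.mpr
    ⟨hf.add_of_left hlt, (natDegree_add_eq_left_of_degree_lt hlt).trans hdeg⟩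

theorem nextCoeff_add_C_mul_X_pow {d : ℕ} (c : F) {f : F[X]}
    (hf : f ∈ monicsOfDegree F (d + 1)) : (f + C c * X ^ d).nextCoeff = f.nextCoeff + c := by
  have hdeg := (mem_monicsOfDegree.mp hf).2
  have hdeg' := (mem_monicsOfDegree.mp (add_C_mul_X_pow_mem_monicsOfDegree c hf)).2
  rw [nextCoeff_of_natDegree_pos (by lia), nextCoeff_of_natDegree_pos (by lia), hdeg, hdeg']
  simp

theorem gaussWeight_add_C_mul_X_pow {d : ℕ} (hd : d ≠ 0) (c : F) {f : F[X]}
    (hf : f ∈ monicsOfDegree F (d + 1)) :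
    gaussWeight χ ψ (f + C c * X ^ d) = ψ (-c) * gaussWeight χ ψ f := by
  have hdeg := (mem_monicsOfDegree.mp hf).2
  have hdeg' := (mem_monicsOfDegree.mp (add_C_mul_X_pow_mem_monicsOfDegree c hf)).2
  simp only [gaussWeight, hdeg, hdeg', nextCoeff_add_C_mul_X_pow c hf, coeff_add,
    coeff_C_mul_X_pow, hd.symm, if_false, add_zero, neg_add, AddChar.map_add_eq_mul]
  ring

theorem sum_gaussWeight_eq_zero (hψ : ∑ c, ψ c = 0) {d : ℕ} (hd : d ≠ 0) :
    ∑ f ∈ monicsOfDegree F (d + 1), gaussWeight χ ψ f = 0 := by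
  classical
  have fiber : ∀ c : F, ∑ f ∈ monicsOfDegree F (d + 1) with f.nextCoeff = c, gaussWeight χ ψ f =
      ψ (-c) * ∑ f ∈ monicsOfDegree F (d + 1) with f.nextCoeff = 0, gaussWeight χ ψ f := by
    intro c
    rw [mul_sum]
    refine (sum_nbij' (fun f => f + C c * X ^ d) (fun f => f + C (-c) * X ^ d)
      (fun f hf => ?_) (fun f hf => ?_) (fun f _ => by simp) (fun f _ => by simp)
      fun f hf => ?_).symm <;> obtain ⟨hf, hnext⟩ := mem_filter.mp hf
    · exact mem_filter.mpr ⟨add_C_mul_X_pow_mem_monicsOfDegree c hf,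
        by rw [nextCoeff_add_C_mul_X_pow c hf, hnext, zero_add]⟩
    · exact mem_filter.mpr ⟨add_C_mul_X_pow_mem_monicsOfDegree (-c) hf,
        by rw [nextCoeff_add_C_mul_X_pow (-c) hf, hnext, add_neg_cancel]⟩
    · exact (gaussWeight_add_C_mul_X_pow χ ψ hd c hf).symm
  calc ∑ f ∈ monicsOfDegree F (d + 1), gaussWeight χ ψ f
      = ∑ c, ∑ f ∈ monicsOfDegree F (d + 1) with f.nextCoeff = c, gaussWeight χ ψ f :=
        (sum_fiberwise _ _ _).symm
    _ = (∑ c, ψ (-c)) * ∑ f ∈ monicsOfDegree F (d + 1) with f.nextCoeff = 0,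
          gaussWeight χ ψ f := by rw [sum_mul]; exact sum_congr rfl fun c _ => fiber c
    _ = 0 := by rw [show ∑ c, ψ (-c) = 0 from (Equiv.sum_comp (Equiv.neg F) ψ).trans hψ, zero_mul]

theorem sum_polyVonMangoldt_mul_gaussWeight [DecidableEq F] (hψ : ∑ c, ψ c = 0) (m : ℕ) :
    ∑ a ∈ monicsOfDegree F (m + 1), polyVonMangoldt a * gaussWeight χ ψ a =
      (-1) ^ m * (∑ u, χ u * ψ u) ^ (m + 1) := by
  have newton := fun d => natCast_mul_sum_monicsOfDegree (F := F)
    (fun a b ha hb => gaussWeight_mul χ ψ (f := a) (g := b) ha hb) (d + 1)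
  simp only [sum_range_succ _ (_ + 1), Nat.sub_self, monicsOfDegree_zero, sum_singleton,
    gaussWeight_one, mul_one] at newton
  induction m with
  | zero =>
    simpa [monicsOfDegree_zero, sum_gaussWeight_one, polyVonMangoldt, not_isPrimePow_one]
      using (newton 0).symm
  | succ m ih =>
    have hsmall : ∑ k ∈ range (m + 1),
        (∑ a ∈ monicsOfDegree F k, (polyVonMangoldt a : R) * gaussWeight χ ψ a) *
          ∑ b ∈ monicsOfDegree F (m + 1 + 1 - k), gaussWeight χ ψ b = 0 := by
      refine sum_eq_zero fun k hk => ?_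
      rw [Nat.succ_sub (by grind), sum_gaussWeight_eq_zero χ ψ hψ (by grind), mul_zero]
    have hnewton := newton (m + 1)
    rw [sum_range_succ, hsmall, Nat.add_sub_cancel_left, sum_gaussWeight_one, ih,
      sum_gaussWeight_eq_zero χ ψ hψ m.succ_ne_zero] at hnewton
    linear_combination -hnewton

end GaussWeight

section HasseDavenport

open Polynomial Finset UniqueFactorizationMonoid
open scoped IntermediateField

variable {F H : Type*} [Field F] [Field H] [Algebra F H]

variable (F) in
/-- The characteristic polynomial of multiplication by `y` on `H`, encoded as the power of the
minimal polynomial of `y` of the right degree. -/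
def powMinpoly (y : H) : F[X] :=
  minpoly F y ^ Module.finrank F⟮y⟯ H

theorem gaussWeight_powMinpoly [FiniteDimensional F H] [Algebra.IsSeparable F H]
    {R : Type*} [CommRing R] (χ : F →* R) (ψ : AddChar F R) (y : H) :
    gaussWeight χ ψ (powMinpoly F y) = χ (Algebra.norm F y) * ψ (Algebra.trace F H y) := by
  have hy : IsIntegral F y := Algebra.IsIntegral.isIntegral y
  have hnorm : Algebra.norm F y =
      ((-1) ^ (minpoly F y).natDegree * (minpoly F y).coeff 0) ^ Module.finrank F⟮y⟯ H := by
    have hgen := Algebra.PowerBasis.norm_gen_eq_coeff_zero_minpoly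
      (IntermediateField.adjoin.powerBasis hy)
    rw [IntermediateField.adjoin.powerBasis_gen hy, IntermediateField.adjoin.powerBasis_dim hy,
      IntermediateField.minpoly_gen] at hgen
    rw [Algebra.norm_eq_norm_adjoin, hgen]
  have htrace : Algebra.trace F H y = Module.finrank F⟮y⟯ H • -(minpoly F y).nextCoeff := by
    rw [trace_eq_finrank_mul_minpoly_nextCoeff, nsmul_eq_mul]
  rw [powMinpoly, gaussWeight_pow χ ψ (minpoly.monic hy), gaussWeight, mul_pow, hnorm, htrace,
    map_pow, AddChar.map_nsmul_eq_pow]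

theorem isPrimePow_powMinpoly [FiniteDimensional F H] (y : H) : IsPrimePow (powMinpoly F y) :=
  (minpoly.prime (Algebra.IsIntegral.isIntegral y)).isPrimePow.pow Module.finrank_pos.ne'

theorem natDegree_powMinpoly [FiniteDimensional F H] (y : H) :
    (powMinpoly F y).natDegree = Module.finrank F H := by
  rw [powMinpoly, natDegree_pow,
    ← IntermediateField.adjoin.finrank (Algebra.IsIntegral.isIntegral y), mul_comm,
    Module.finrank_mul_finrank]

theorem powMinpoly_mem_monicsOfDegree [Fintype F] [FiniteDimensional F H] (y : H) :
    powMinpoly F y ∈ monicsOfDegree F (Module.finrank F H) :=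
  mem_monicsOfDegree.mpr
    ⟨(minpoly.monic (Algebra.IsIntegral.isIntegral y)).pow _, natDegree_powMinpoly y⟩

theorem powMinpoly_eq_pow_iff [FiniteDimensional F H] {P : F[X]} (hP : P.Monic)
    (hirr : Irreducible P) {j : ℕ} (hj : (P ^ j).natDegree = Module.finrank F H) (y : H) :
    powMinpoly F y = P ^ j ↔ aeval y P = 0 := by
  constructor
  · intro h
    have hy : aeval y (powMinpoly F y) = 0 := by
      rw [powMinpoly, map_pow, minpoly.aeval, zero_pow Module.finrank_pos.ne']
    rw [h, map_pow] at hy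
    exact eq_zero_of_pow_eq_zero hy
  · intro hy
    have hminpoly := minpoly.eq_of_irreducible_of_monic hirr hy hP
    have hdeg := natDegree_powMinpoly (F := F) y
    rw [powMinpoly, ← hminpoly] at hdeg ⊢
    rw [← hj, natDegree_pow, natDegree_pow] at hdeg
    rw [Nat.eq_of_mul_eq_mul_right hirr.natDegree_pos hdeg]

theorem card_aeval_eq_zero_of_irreducible [Fintype H] [DecidableEq H] {P : F[X]}
    (hirr : Irreducible P) (hdvd : P.natDegree ∣ Module.finrank F H) :
    #{y : H | aeval y P = 0} = P.natDegree := by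
  have := Finite.of_injective _ (algebraMap F H).injective
  have := Fact.mk hirr
  obtain ⟨φ⟩ : Nonempty (AdjoinRoot P →ₐ[F] H) :=
    FiniteField.nonempty_algHom_of_finrank_dvd
      (by rwa [(AdjoinRoot.powerBasis hirr.ne_zero).finrank])
  have hroot : aeval (φ (AdjoinRoot.root P)) P = 0 := by
    rw [aeval_algHom_apply, AdjoinRoot.aeval_eq, AdjoinRoot.mk_self, map_zero]
  have hint : IsIntegral F (φ (AdjoinRoot.root P)) := Algebra.IsIntegral.isIntegral _
  have hsplits : (P.map (algebraMap F H)).Splits :=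
    (IsGalois.splits F (φ (AdjoinRoot.root P))).of_dvd (map_ne_zero (minpoly.ne_zero hint))
      (map_dvd (mapRingHom _) ((minpoly.irreducible hint).dvd_symm hirr (minpoly.dvd F _ hroot)))
  rw [← card_rootSet_eq_natDegree (PerfectField.separable_of_irreducible hirr) hsplits,
    ← Set.toFinset_card]
  congr 1
  ext y
  simp [mem_rootSet, hirr.ne_zero]

theorem card_powMinpoly_eq [Fintype F] [Fintype H] [DecidableEq F] {a : F[X]}
    (ha : a ∈ monicsOfDegree F (Module.finrank F H)) :
    #{y : H | powMinpoly F y = a} = polyVonMangoldt a := by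
  classical
  obtain ⟨hmonic, hdeg⟩ := mem_monicsOfDegree.mp ha
  by_cases hpow : IsPrimePow a
  · obtain ⟨P, hP, j, hj, rfl⟩ :=
      exists_mem_primeFactors_of_isPrimePow hmonic hpow hmonic.ne_zero dvd_rfl
    have hirr := irreducible_of_normalized_factor P (mem_primeFactors.mp hP)
    rw [polyVonMangoldt_pow hP hj, ← card_aeval_eq_zero_of_irreducible hirr
      (hdeg ▸ natDegree_pow P j ▸ dvd_mul_left _ _)]
    simp only [powMinpoly_eq_pow_iff (monic_of_mem_primeFactors hP) hirr hdeg]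
  · rw [polyVonMangoldt, if_neg hpow, card_eq_zero, filter_eq_empty_iff]
    rintro y - rfl
    exact hpow (isPrimePow_powMinpoly y)

theorem hasse_davenport [Fintype F] [Fintype H] {R : Type*} [CommRing R] (χ : F →* R)
    (ψ : AddChar F R) (hψ : ∑ c, ψ c = 0) :
    ∑ y : H, χ (Algebra.norm F y) * ψ (Algebra.trace F H y) =
      (-1) ^ (Module.finrank F H - 1) * (∑ u, χ u * ψ u) ^ Module.finrank F H := by
  classical
  calc ∑ y : H, χ (Algebra.norm F y) * ψ (Algebra.trace F H y)
      = ∑ y : H, gaussWeight χ ψ (powMinpoly F y) := by simp only [gaussWeight_powMinpoly]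
    _ = ∑ a ∈ monicsOfDegree F (Module.finrank F H), ∑ y : H with powMinpoly F y = a,
          gaussWeight χ ψ (powMinpoly F y) :=
        (sum_fiberwise_of_maps_to (fun y _ => powMinpoly_mem_monicsOfDegree y) _).symm
    _ = ∑ a ∈ monicsOfDegree F (Module.finrank F H), polyVonMangoldt a * gaussWeight χ ψ a := by
        refine sum_congr rfl fun a ha => ?_
        rw [sum_congr rfl fun y hy => by rw [(mem_filter.mp hy).2], sum_const,
          card_powMinpoly_eq ha, nsmul_eq_mul]
    _ = _ := by
        obtain ⟨m, hm⟩ := Nat.exists_eq_succ_of_ne_zero (Module.finrank_pos (R := F) (M := H)).ne'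
        rw [hm, Nat.succ_sub_one, ← sum_polyVonMangoldt_mul_gaussWeight χ ψ hψ]

theorem sum_norm_mul_trace [Fintype F] [Fintype H] {R : Type*} [CommRing R] (φ : F → R)
    (ψ : AddChar F R) (hψ : ∑ c, ψ c = 0) :
    ∑ y : H, φ (Algebra.norm F y) * ψ (Algebra.trace F H y) =
      (-1) ^ (Module.finrank F H - 1) *
        ∑ u : Fin (Module.finrank F H) → F, φ (∏ i, u i) * ψ (∑ i, u i) := by
  -- For the universal multiplicative character `F →* R[F]`, Hasse–Davenport determines the sum
  -- over every single fibre of the norm, hence for an arbitrary function `φ` of the norm.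
  let incl := algebraMap R (MonoidAlgebra R F)
  let χ : F →* MonoidAlgebra R F := MonoidAlgebra.of R F
  let Ψ : AddChar F (MonoidAlgebra R F) := (incl : R →* MonoidAlgebra R F).compAddChar ψ
  let ev : MonoidAlgebra R F →ₗ[R] R :=
    Finsupp.linearCombination R φ ∘ₗ (MonoidAlgebra.coeffLinearEquiv R).toLinearMap
  have hΨ : ∑ c, Ψ c = 0 := by
    simpa [Ψ, incl] using congrArg incl hψ
  have hev : ∀ n t, ev (χ n * Ψ t) = φ n * ψ t := fun n t => by
    simp [ev, χ, Ψ, incl, mul_comm]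
  have hsum : (∑ u, χ u * Ψ u) ^ Module.finrank F H =
      ∑ u : Fin (Module.finrank F H) → F, χ (∏ i, u i) * Ψ (∑ i, u i) := by
    have hprod : ∀ u : Fin (Module.finrank F H) → F, Ψ (∑ i, u i) = ∏ i, Ψ (u i) := fun u =>
      map_prod Ψ.toMonoidHom (fun i => Multiplicative.ofAdd (u i)) univ
    simp only [Fintype.sum_pow, prod_mul_distrib, map_prod, hprod]
  have h := hasse_davenport (H := H) χ Ψ hΨ
  rw [hsum, show (-1 : MonoidAlgebra R F) = incl (-1) by simp, ← map_pow, ← Algebra.smul_def] at h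
  simpa only [map_sum, map_smul, hev, smul_eq_mul] using congrArg ev h

end HasseDavenport

section TraceSums

open Finset

variable {E F R : Type*} [Field E] [Field F] [Algebra E F] [CommRing R]

variable (F) in
/-- The additive character `ψ ∘ Tr_{F/E}` of `F` lifting the character `ψ` of `E`. -/
def traceLift (ψ : AddChar E R) : AddChar F R :=
  ψ.compAddMonoidHom (Algebra.trace E F).toAddMonoidHom

theorem traceLift_apply (ψ : AddChar E R) (x : F) :
    traceLift F ψ x = ψ (Algebra.trace E F x) :=
  rfl

theorem traceLift_ne_one [FiniteDimensional E F] [Algebra.IsSeparable E F] {ψ : AddChar E R}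
    (hψ : ψ ≠ 1) : traceLift F ψ ≠ 1 := by
  obtain ⟨e, he⟩ := AddChar.ne_one_iff.mp hψ
  obtain ⟨x, rfl⟩ := Algebra.trace_surjective E F e
  exact AddChar.ne_one_iff.mpr ⟨x, he⟩

variable [IsDomain R] {ψ : AddChar E R}

theorem sum_addChar_mul_of_ne_one [Fintype E] [DecidableEq E] (hψ : ψ ≠ 1) (b : E) :
    ∑ e : E, ψ (e * b) = if b = 0 then (Fintype.card E : R) else 0 := by
  rw [AddChar.sum_mulShift b (AddChar.IsPrimitive.of_ne_one hψ), Nat.cast_ite, Nat.cast_zero]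

theorem sum_traceLift_algebraMap_mul_add [Fintype E] [DecidableEq E] (hψ : ψ ≠ 1) (x y : F) :
    ∑ e : E, traceLift F ψ (algebraMap E F e * x + y) =
      Fintype.card E * if Algebra.trace E F x = 0 then traceLift F ψ y else 0 := by
  simp only [← Algebra.smul_def, AddChar.map_add_eq_mul, ← sum_mul, traceLift_apply, map_smul,
    smul_eq_mul, sum_addChar_mul_of_ne_one hψ, ite_mul, mul_ite, zero_mul, mul_zero]

theorem sum_traceLift_mul_mul_add [Finite E] [Fintype F] [DecidableEq F] (hψ : ψ ≠ 1) (k : F) :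
    ∑ u : F, ∑ v : F, ∑ w : F, traceLift F ψ (k * (u * v * w) + (u + v + w)) =
      Fintype.card F * ∑ u : F, ∑ v : F, if k * u * v = -1 then traceLift F ψ (u + v) else 0 := by
  simp only [mul_sum]
  refine sum_congr rfl fun u _ => sum_congr rfl fun v _ => ?_
  calc ∑ w : F, traceLift F ψ (k * (u * v * w) + (u + v + w))
      = traceLift F ψ (u + v) * ∑ w : F, traceLift F ψ (w * (k * u * v + 1)) := by
        rw [mul_sum]
        refine sum_congr rfl fun w _ => ?_
        rw [← AddChar.map_add_eq_mul]
        congr 1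
        ring
    _ = _ := by
        simp only [sum_addChar_mul_of_ne_one (traceLift_ne_one hψ), add_eq_zero_iff_eq_neg]
        split_ifs <;> ring

variable [Fintype E] [Fintype F] [DecidableEq E] [DecidableEq F]

theorem sum_sum_ite_algebraMap_mul_eq_neg_one (hψ : ψ ≠ 1) {d : F} (hd : d ≠ 0) :
    ∑ e : E, ∑ v : F, (if algebraMap E F e * d * v = -1 then traceLift F ψ v else 0) =
      (if Algebra.trace E F d⁻¹ = 0 then (Fintype.card E : R) else 0) - 1 := by
  have inner : ∀ e : E,
      ∑ v : F, (if algebraMap E F e * d * v = -1 then traceLift F ψ v else 0) =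
        if -e⁻¹ = 0 then 0 else ψ (-e⁻¹ * Algebra.trace E F d⁻¹) := by
    intro e
    rcases eq_or_ne e 0 with rfl | he
    · simp
    have hed : algebraMap E F e * d ≠ 0 := mul_ne_zero (by simpa using he) hd
    have hsolve : ∀ v, algebraMap E F e * d * v = -1 ↔ v = -e⁻¹ • d⁻¹ := fun v => by
      rw [mul_comm, ← eq_div_iff hed, Algebra.smul_def, map_neg, map_inv₀]
      field_simp
    simp only [hsolve, sum_ite_eq', mem_univ, if_true, neg_eq_zero, inv_eq_zero, he, if_false,
      traceLift_apply, map_smul, smul_eq_mul]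
  calc ∑ e : E, ∑ v : F, (if algebraMap E F e * d * v = -1 then traceLift F ψ v else 0)
      = ∑ e : E, if e = 0 then 0 else ψ (e * Algebra.trace E F d⁻¹) := by
        simp only [inner]
        exact Equiv.sum_comp ((Equiv.inv E).trans (Equiv.neg E))
          fun e => if e = 0 then 0 else ψ (e * Algebra.trace E F d⁻¹)
    _ = ∑ e : E, ψ (e * Algebra.trace E F d⁻¹) - 1 := by
        rw [← add_sum_erase _ _ (mem_univ (0 : E)), ← add_sum_erase _ _ (mem_univ (0 : E))]
        simp only [if_true, zero_mul, AddChar.map_zero_eq_one, zero_add, add_sub_cancel_left]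
        exact sum_congr rfl fun e he => if_neg (ne_of_mem_erase he)
    _ = _ := by rw [sum_addChar_mul_of_ne_one hψ]

theorem card_mul_sum_traceLift_add (hψ : ψ ≠ 1) {c : F} (hc : c ≠ 0) :
    (Fintype.card E : R) * ∑ u : F, ∑ v : F, ∑ w : F,
        (if Algebra.trace E F (c * (u * v * w)) = 0 then traceLift F ψ (u + v + w) else 0) =
      Fintype.card F * (1 + Fintype.card E *
        ∑ u : F with u ≠ 0 ∧ Algebra.trace E F (c * u)⁻¹ = 0, traceLift F ψ u) := by
  have nonzero_sum : ∑ u ∈ univ.erase (0 : F), traceLift F ψ u = -1 := by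
    rw [← add_left_cancel_iff (a := traceLift F ψ 0), add_sum_erase _ _ (mem_univ _),
      AddChar.sum_eq_zero_of_ne_one (traceLift_ne_one hψ), AddChar.map_zero_eq_one,
      add_neg_cancel]
  calc _ = ∑ e : E, ∑ u : F, ∑ v : F, ∑ w : F,
          traceLift F ψ (algebraMap E F e * c * (u * v * w) + (u + v + w)) := by
        simp only [mul_sum, ← sum_traceLift_algebraMap_mul_add hψ, mul_assoc]
        rw [sum_comm (s := (univ : Finset E))]
        refine sum_congr rfl fun u _ => ?_
        rw [sum_comm (s := (univ : Finset E))]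
        exact sum_congr rfl fun v _ => sum_comm
    _ = Fintype.card F * ∑ u : F, traceLift F ψ u *
          ∑ e : E, ∑ v : F, if algebraMap E F e * (c * u) * v = -1 then traceLift F ψ v else 0 := by
        simp only [sum_traceLift_mul_mul_add hψ, ← mul_sum]
        rw [sum_comm]
        simp only [AddChar.map_add_eq_mul, mul_sum, mul_ite, mul_zero, mul_assoc]
    _ = Fintype.card F * ∑ u ∈ univ.erase (0 : F), traceLift F ψ u *
          ((if Algebra.trace E F (c * u)⁻¹ = 0 then (Fintype.card E : R) else 0) - 1) := by
        rw [← add_sum_erase _ _ (mem_univ (0 : F))]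
        have vanish : ∑ e : E, ∑ v : F, (if algebraMap E F e * (c * 0) * v = -1
            then traceLift F ψ v else 0) = 0 := by simp
        rw [vanish, mul_zero, zero_add]
        congr 1
        exact sum_congr rfl fun u hu => by
          rw [sum_sum_ite_algebraMap_mul_eq_neg_one hψ (mul_ne_zero hc (ne_of_mem_erase hu))]
    _ = _ := by
        simp only [mul_sub, mul_one, sum_sub_distrib, nonzero_sum, mul_ite, mul_zero,
          ← sum_filter, ← sum_mul]
        rw [show {u ∈ univ.erase (0 : F) | Algebra.trace E F (c * u)⁻¹ = 0} =
          ({u | u ≠ 0 ∧ Algebra.trace E F (c * u)⁻¹ = 0} : Finset F) by ext; simp]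
        ring

end TraceSums

section Tower

open Finset

theorem sum_fin_three {α M : Type*} [Fintype α] [AddCommMonoid M] (g : α → α → α → M) :
    ∑ u : Fin 3 → α, g (u 0) (u 1) (u 2) = ∑ u, ∑ v, ∑ w, g u v w := by
  simp only [← Fintype.sum_prod_type']
  refine sum_nbij' (fun u => (u 0, u 1, u 2)) (fun p => ![p.1, p.2.1, p.2.2]) (by simp) (by simp)
    (fun u _ => ?_) (by simp) (by simp)
  ext i
  fin_cases i <;> rfl

variable {E F H R : Type*} [Field E] [Field F] [Field H] [Algebra E F] [Algebra F H] [CommRing R]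
  [IsDomain R] [Fintype E] [Fintype F] [Fintype H] [DecidableEq E] [DecidableEq F]
  {ψ : AddChar E R}

theorem card_mul_sum_traceLift_norm (h3 : Module.finrank F H = 3) (hψ : ψ ≠ 1) {b : H}
    (hb : b ≠ 0) :
    (Fintype.card E : R) * ∑ x : H with Algebra.trace E F (Algebra.norm F x) = 0,
        traceLift H (traceLift F ψ) (b * x) =
      Fintype.card F * (1 + Fintype.card E *
        ∑ u : F with u ≠ 0 ∧ Algebra.trace E F u⁻¹ = 0, traceLift F ψ (Algebra.norm F b * u)) := by
  have hN : Algebra.norm F b ≠ 0 := Algebra.norm_ne_zero_iff.mpr hb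
  calc (Fintype.card E : R) * ∑ x : H with Algebra.trace E F (Algebra.norm F x) = 0,
        traceLift H (traceLift F ψ) (b * x)
      = Fintype.card E * ∑ y : H,
          (if Algebra.trace E F ((Algebra.norm F b)⁻¹ * Algebra.norm F y) = 0 then 1 else 0) *
            traceLift F ψ (Algebra.trace F H y) := by
        rw [sum_filter]
        refine congrArg _ (Fintype.sum_equiv (Equiv.mulLeft₀ b hb) _ _ fun x => ?_)
        rw [Equiv.mulLeft₀, Units.mulLeft_apply, Units.val_mk0, map_mul (Algebra.norm F),
          inv_mul_cancel_left₀ hN, ite_mul, one_mul, zero_mul, traceLift_apply]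
    _ = Fintype.card E * ∑ u : F, ∑ v : F, ∑ w : F,
          if Algebra.trace E F ((Algebra.norm F b)⁻¹ * (u * v * w)) = 0
            then traceLift F ψ (u + v + w) else 0 := by
        rw [sum_norm_mul_trace
          (fun n => if Algebra.trace E F ((Algebra.norm F b)⁻¹ * n) = 0 then 1 else 0) _
          (AddChar.sum_eq_zero_of_ne_one (traceLift_ne_one hψ)), h3]
        simp only [Nat.reduceSub, neg_one_sq, one_mul, ite_mul, zero_mul, Fin.prod_univ_three,
          Fin.sum_univ_three]
        rw [sum_fin_three fun u v w => if Algebra.trace E F ((Algebra.norm F b)⁻¹ * (u * v * w)) = 0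
            then traceLift F ψ (u + v + w) else 0]
    _ = Fintype.card F * (1 + Fintype.card E *
          ∑ u : F with u ≠ 0 ∧ Algebra.trace E F ((Algebra.norm F b)⁻¹ * u)⁻¹ = 0,
            traceLift F ψ u) :=
        card_mul_sum_traceLift_add hψ (inv_ne_zero hN)
    _ = _ := by
        congr 3
        refine (sum_equiv (Equiv.mulLeft₀ _ hN) (fun u => ?_) fun u _ => rfl).symm
        simp [hN]

end Tower

section ScalarInvariant

open Finset

variable {E V : Type*} [Field E] [Fintype E] [AddCommGroup V] [Module E V]

theorem card_sub_one_mul_sum_addChar {R : Type*} [CommRing R] [IsDomain R] [DecidableEq E]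
    {ψ : AddChar E R} (hψ : ψ ≠ 1) {A : Finset V}
    (hA : ∀ e : E, e ≠ 0 → ∀ v ∈ A, e • v ∈ A) (l : V →ₗ[E] E) :
    ((Fintype.card E : R) - 1) * ∑ v ∈ A, ψ (l v) = Fintype.card E * #{v ∈ A | l v = 0} - #A := by
  have scale : ∀ e ∈ univ.erase (0 : E), ∑ v ∈ A, ψ (e * l v) = ∑ v ∈ A, ψ (l v) := by
    intro e he
    have he := ne_of_mem_erase he
    refine sum_nbij' (e • ·) (e⁻¹ • ·) (hA e he) (hA _ (inv_ne_zero he))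
      (fun v _ => inv_smul_smul₀ he v) (fun v _ => smul_inv_smul₀ he v) fun v _ => ?_
    rw [map_smul, smul_eq_mul]
  have total : ∑ e : E, ∑ v ∈ A, ψ (e * l v) = Fintype.card E * #{v ∈ A | l v = 0} := by
    rw [sum_comm]
    simp only [sum_addChar_mul_of_ne_one hψ, ← sum_filter, sum_const, nsmul_eq_mul, mul_comm]
  rw [← total, ← add_sum_erase _ _ (mem_univ (0 : E)), sum_congr rfl scale, sum_const,
    card_erase_of_mem (mem_univ _), card_univ, nsmul_eq_mul,
    Nat.cast_pred Fintype.card_pos]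
  simp

theorem exists_subset_span_singleton_of_card_eq {A : Finset V}
    (hA : ∀ e : E, ∀ v ∈ A, e • v ∈ A) (hcard : #A = Fintype.card E) :
    ∃ u ∈ A, u ≠ 0 ∧ ∀ v ∈ A, v ∈ E ∙ u := by
  classical
  obtain ⟨u, hu, hu0⟩ := exists_mem_ne (hcard ▸ Fintype.one_lt_card) (0 : V)
  have hline : univ.image (fun e : E => e • u) = A :=
    eq_of_subset_of_card_le (image_subset_iff.mpr fun e _ => hA e u hu) <| by
      rw [card_image_of_injective _ (smul_left_injective E hu0), hcard, card_univ]
  refine ⟨u, hu, hu0, fun v hv => ?_⟩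
  rw [← hline] at hv
  obtain ⟨e, -, rfl⟩ := mem_image.mp hv
  exact Submodule.smul_mem _ e (Submodule.mem_span_singleton_self u)

theorem card_mul_card_filter_eq_zero [Fintype V] [DecidableEq E] {l : V →ₗ[E] E} (hl : l ≠ 0) :
    Fintype.card E * #{v | l v = 0} = Fintype.card V := by
  have hker : #{v | l v = 0} = Fintype.card E ^ Module.finrank E (LinearMap.ker l) := by
    rw [← Nat.card_eq_fintype_card, ← Module.natCard_eq_pow_finrank]
    exact (Nat.subtype_card _ fun v => by rw [mem_filter_univ, LinearMap.mem_ker]).symm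
  rw [hker, ← pow_succ', Module.Dual.finrank_ker_add_one_of_ne_zero hl,
    Module.card_eq_pow_finrank (K := E) (V := V)]

theorem card_mul_card_ne_zero_trace_inv_eq_zero {F : Type*} [Field F] [Algebra E F] [Fintype F]
    [DecidableEq E] [DecidableEq F] :
    Fintype.card E * (#{u : F | u ≠ 0 ∧ Algebra.trace E F u⁻¹ = 0} + 1) = Fintype.card F := by
  rw [← card_mul_card_filter_eq_zero (Algebra.trace_ne_zero E F),
    ← card_erase_add_one (s := {u : F | Algebra.trace E F u = 0}) (a := 0) (by simp)]
  congr 2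
  exact card_equiv (Equiv.inv F) fun u => by simp

end ScalarInvariant

section IsotropicVectors

theorem polar_eq_zero_of_isotropic_subset_span {E V : Type*} [Field E] [AddCommGroup V]
    [Module E V] (Q : QuadraticForm E V) {W : Submodule E V} {u v : V} (huW : u ∈ W)
    (hQu : Q u = 0) (hW : ∀ w ∈ W, Q w = 0 → w ∈ E ∙ u) (hv : v ∈ W) :
    QuadraticMap.polar Q u v = 0 := by
  by_contra hpolar
  -- `w` is the second intersection of the quadric with the line through `u` and `v`.
  let w := Q v • u - QuadraticMap.polar Q u v • v
  have hw : Q w = 0 := by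
    have h := QuadraticMap.map_add Q (Q v • u) (-(QuadraticMap.polar Q u v • v))
    rw [← sub_eq_add_neg] at h
    rw [h, QuadraticMap.map_neg, QuadraticMap.map_smul, QuadraticMap.map_smul,
      QuadraticMap.polar_neg_right, QuadraticMap.polar_smul_left, QuadraticMap.polar_smul_right,
      hQu]
    simp only [smul_eq_mul]
    ring
  have hwu : w ∈ E ∙ u :=
    hW w (W.sub_mem (W.smul_mem _ huW) (W.smul_mem _ hv)) hw
  have hvu : v ∈ E ∙ u := by
    rw [← Submodule.smul_mem_iff _ hpolar,
      ← sub_sub_cancel (Q v • u) (QuadraticMap.polar Q u v • v)]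
    exact Submodule.sub_mem _ (Submodule.smul_mem _ _ (Submodule.mem_span_singleton_self u)) hwu
  obtain ⟨t, rfl⟩ := Submodule.mem_span_singleton.mp hvu
  rw [QuadraticMap.polar_smul_right, QuadraticMap.polar_self, hQu, smul_zero, smul_zero] at hpolar
  exact hpolar rfl

end IsotropicVectors

section TraceConic

open Finset

variable {E F : Type*} [Field E] [Field F] [Algebra E F]

theorem exists_smul_eq_of_ker_traceForm_le [FiniteDimensional E F] [Algebra.IsSeparable E F]
    {d k : F} (h : ∀ x, Algebra.trace E F (d * x) = 0 → Algebra.trace E F (k * x) = 0) :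
    ∃ e : E, e • d = k := by
  have hk : Algebra.traceForm E F k ∈ Submodule.span E
      (Set.range fun _ : Unit => Algebra.traceForm E F d) :=
    mem_span_of_iInf_ker_le_ker (by simpa [SetLike.le_def] using h)
  rw [Set.range_const] at hk
  obtain ⟨e, he⟩ := Submodule.mem_span_singleton.mp hk
  rw [← map_smul] at he
  exact ⟨e, LinearMap.ker_eq_bot.mp (traceForm_nondegenerate E F).ker_eq_bot he⟩

theorem trace_algebraMap_of_odd_finrank [CharP E 2] (hodd : Odd (Module.finrank E F)) (e : E) :
    Algebra.trace E F (algebraMap E F e) = e := by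
  rw [Algebra.trace_algebraMap, nsmul_eq_mul,
    natCast_eq_one_of_odd_of_two_eq_zero hodd CharTwo.two_eq_zero, one_mul]

variable [Fintype E]

variable (E F) in
/-- The quadratic form `u ↦ Tr_{F/E}(u ^ (q + 1))`, `q = |E|`, on `F` over `E`. In degree three its
zeros form a conic in the projective plane of `F`. -/
def traceConic : QuadraticForm E F :=
  LinearMap.BilinMap.toQuadraticMap
    ((Algebra.traceForm E F).compl₂ (FiniteField.frobeniusAlgHom E F).toLinearMap)

theorem traceConic_apply (u : F) :
    traceConic E F u = Algebra.trace E F (u ^ (Fintype.card E + 1)) := by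
  rw [pow_succ']
  rfl

theorem polar_traceConic_apply (u v : F) : QuadraticMap.polar (traceConic E F) u v =
    Algebra.trace E F (u * v ^ Fintype.card E + u ^ Fintype.card E * v) := by
  rw [map_add, mul_comm (u ^ _), traceConic, LinearMap.BilinMap.polar_toQuadraticMap]
  rfl

variable [Finite F] (h3 : Module.finrank E F = 3)
include h3

theorem algebraMap_trace_eq_of_finrank_eq_three (x : F) : algebraMap E F (Algebra.trace E F x) =
    x + x ^ Fintype.card E + (x ^ Fintype.card E) ^ Fintype.card E := by
  rw [FiniteField.algebraMap_trace_eq_sum_pow, h3, Nat.card_eq_fintype_card, sum_range_succ,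
    sum_range_succ, sum_range_one, pow_zero, pow_one, pow_one, pow_two, pow_mul]

theorem pow_card_pow_card_pow_card_of_finrank_eq_three (x : F) :
    ((x ^ Fintype.card E) ^ Fintype.card E) ^ Fintype.card E = x := by
  have := Fintype.ofFinite F
  rw [← pow_mul, ← pow_mul, ← pow_three, ← h3, ← Module.card_eq_pow_finrank,
    FiniteField.pow_card]

theorem polar_traceConic (u v : F) : QuadraticMap.polar (traceConic E F) u v =
    Algebra.trace E F u * Algebra.trace E F v - Algebra.trace E F (u * v) := by
  apply (algebraMap E F).injective
  have frobenius_add : ∀ x y : F, (x + y) ^ Fintype.card E =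
      x ^ Fintype.card E + y ^ Fintype.card E := (FiniteField.frobeniusAlgHom E F).map_add
  rw [polar_traceConic_apply, map_sub, map_mul]
  simp only [algebraMap_trace_eq_of_finrank_eq_three h3, frobenius_add, mul_pow,
    pow_card_pow_card_pow_card_of_finrank_eq_three h3]
  ring

theorem traceConic_eq_norm_mul_trace_inv {u : F} (hu : u ≠ 0) :
    traceConic E F u = Algebra.norm E u * Algebra.trace E F u⁻¹ := by
  apply (algebraMap E F).injective
  have hu' : u ^ Fintype.card E ≠ 0 := pow_ne_zero _ hu
  have hu'' : (u ^ Fintype.card E) ^ Fintype.card E ≠ 0 := pow_ne_zero _ hu'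
  rw [traceConic_apply, map_mul, FiniteField.algebraMap_norm_eq_prod_pow, h3,
    Nat.card_eq_fintype_card, prod_range_succ, prod_range_succ, prod_range_one, pow_zero, pow_one,
    pow_one, pow_two, pow_mul]
  simp only [algebraMap_trace_eq_of_finrank_eq_three h3, pow_succ _ (Fintype.card E), mul_pow,
    inv_pow, pow_card_pow_card_pow_card_of_finrank_eq_three h3]
  field_simp
  ring

theorem traceConic_eq_zero_iff {u : F} (hu : u ≠ 0) :
    traceConic E F u = 0 ↔ Algebra.trace E F u⁻¹ = 0 := by
  rw [traceConic_eq_norm_mul_trace_inv h3 hu,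
    mul_eq_zero_iff_left (Algebra.norm_ne_zero_iff.mpr hu)]

theorem traceConic_add_algebraMap [CharP E 2] (u : F) (e : E) :
    traceConic E F (u + algebraMap E F e) = traceConic E F u + e ^ 2 := by
  have hodd : Odd (Module.finrank E F) := h3 ▸ odd_two_mul_add_one 1
  have hpolar : QuadraticMap.polar (traceConic E F) u (algebraMap E F e) = 0 := by
    rw [polar_traceConic h3, trace_algebraMap_of_odd_finrank hodd, mul_comm u, ← Algebra.smul_def,
      map_smul, smul_eq_mul, mul_comm, sub_self]
  have he : traceConic E F (algebraMap E F e) = e ^ 2 := by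
    rw [traceConic_apply, ← map_pow, trace_algebraMap_of_odd_finrank hodd, pow_succ,
      FiniteField.pow_card, pow_two]
  rw [QuadraticMap.map_add (traceConic E F), hpolar, he, add_zero]

end TraceConic

section TangentLines

open Finset

variable {E F : Type*} [Field E] [Field F] [Algebra E F] [Fintype E] [Fintype F] [CharP E 2]
  [DecidableEq E] {d : F}

theorem card_isotropic_mul_card (h3 : Module.finrank E F = 3) (hd : Algebra.trace E F d = 0) :
    #{u : F | traceConic E F u = 0 ∧ Algebra.trace E F (d * u) = 0} * Fintype.card E =
      #{v : F | Algebra.trace E F (d * v) = 0} := by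
  have horth : ∀ (u : F) (e : E),
      Algebra.trace E F (d * (u + algebraMap E F e)) = Algebra.trace E F (d * u) := fun u e => by
    rw [mul_add, map_add, mul_comm d (algebraMap E F e), ← Algebra.smul_def, map_smul, hd,
      smul_zero, add_zero]
  choose root hroot using fun e : E => isSquare_of_charTwo' e
  rw [← card_univ (α := E), ← card_product]
  refine card_nbij' (fun p => p.1 + algebraMap E F p.2)
    (fun v => (v + algebraMap E F (root (traceConic E F v)), root (traceConic E F v)))
    (fun p hp => ?_) (fun v hv => ?_) (fun p hp => ?_) fun v _ => ?_
  · rw [mem_coe, mem_product, mem_filter_univ] at hp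
    rw [mem_coe, mem_filter_univ, horth, hp.1.2]
  · rw [mem_coe, mem_filter_univ] at hv
    rw [mem_coe, mem_product, mem_filter_univ, horth, traceConic_add_algebraMap h3, pow_two,
      ← hroot, CharTwo.add_self_eq_zero]
    exact ⟨⟨rfl, hv⟩, mem_univ _⟩
  · obtain ⟨u, e⟩ := p
    rw [mem_coe, mem_product, mem_filter_univ] at hp
    have he : root (traceConic E F (u + algebraMap E F e)) = e := by
      apply CharTwo.sq_inj.mp
      rw [pow_two, ← hroot, traceConic_add_algebraMap h3, hp.1.1, zero_add]
    simp only [he, add_assoc, ← map_add, CharTwo.add_self_eq_zero, map_zero, add_zero]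
  · simp only [add_assoc, ← map_add, CharTwo.add_self_eq_zero, map_zero, add_zero]

theorem card_isotropic_of_trace_eq_zero (h3 : Module.finrank E F = 3) (hd0 : d ≠ 0)
    (hd : Algebra.trace E F d = 0) :
    #{u : F | traceConic E F u = 0 ∧ Algebra.trace E F (d * u) = 0} = Fintype.card E := by
  have hform : Algebra.traceForm E F d ≠ 0 := fun h =>
    hd0 ((traceForm_nondegenerate E F).1 d fun x => by rw [h, LinearMap.zero_apply])
  have hperp : Fintype.card E * #{v : F | Algebra.trace E F (d * v) = 0} = Fintype.card E ^ 3 := by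
    rw [← h3, ← Module.card_eq_pow_finrank]
    exact card_mul_card_filter_eq_zero hform
  rw [← card_isotropic_mul_card h3 hd, pow_three] at hperp
  have hq := Fintype.card_pos (α := E)
  exact Nat.eq_of_mul_eq_mul_right hq (Nat.eq_of_mul_eq_mul_left hq hperp)

theorem card_isotropic_ne_of_trace_ne_zero (h3 : Module.finrank E F = 3)
    (hd : Algebra.trace E F d ≠ 0) :
    #{u : F | traceConic E F u = 0 ∧ Algebra.trace E F (d * u) = 0} ≠ Fintype.card E := by
  classical
  -- A line meeting the conic only at `u` is polar to `u`, so `d` is proportional to `Tr u - u`,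
  -- whose trace vanishes.
  intro hcard
  obtain ⟨u, hu, hu0, hspan⟩ := exists_subset_span_singleton_of_card_eq (fun e v hv => by
    rw [mem_filter_univ] at hv ⊢
    rw [QuadraticMap.map_smul, hv.1, mul_smul_comm, map_smul, hv.2, smul_zero, smul_zero]
    exact ⟨rfl, rfl⟩) hcard
  simp only [mem_filter_univ, and_imp] at hu hspan
  have hpolar : ∀ v, Algebra.trace E F (d * v) = 0 →
      QuadraticMap.polar (traceConic E F) u v = 0 := fun v hv =>
    polar_eq_zero_of_isotropic_subset_span (W := LinearMap.ker (Algebra.traceForm E F d)) _ hu.2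
      hu.1 (fun w hw hQw => hspan w hQw hw) hv
  obtain ⟨e, he⟩ : ∃ e : E, e • d = algebraMap E F (Algebra.trace E F u) - u :=
    exists_smul_eq_of_ker_traceForm_le fun v hv => by
      rw [sub_mul, map_sub, ← Algebra.smul_def, map_smul, smul_eq_mul, ← polar_traceConic h3,
        hpolar v hv]
  have he0 : e = 0 := by
    have htrace := congrArg (Algebra.trace E F) he
    rw [map_smul, map_sub, trace_algebraMap_of_odd_finrank (h3 ▸ odd_two_mul_add_one 1), sub_self,
      smul_eq_mul] at htrace
    exact (mul_eq_zero_iff_right hd).mp htrace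
  rw [he0, zero_smul, eq_comm, sub_eq_zero] at he
  have htrace_u : Algebra.trace E F u = 0 := by
    have hu2 := hu.2
    rw [← he, mul_comm, ← Algebra.smul_def, map_smul] at hu2
    exact (smul_eq_zero_iff_left hd).mp hu2
  rw [htrace_u, map_zero] at he
  exact hu0 he.symm

end TangentLines

section FiniteFieldTowers

theorem finrank_eq_of_card_eq_pow {K L : Type*} [Field K] [Fintype K] [Field L] [Fintype L]
    [Algebra K L] {n : ℕ} (h : Fintype.card L = Fintype.card K ^ n) : Module.finrank K L = n :=
  Nat.pow_right_injective Fintype.one_lt_card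
    (h ▸ (Module.card_eq_pow_finrank (K := K) (V := L)).symm)

theorem exists_intermediateField_card_eq_pow {p m n : ℕ} [Fact p.Prime] {K : Type*} [Field K]
    [Fintype K] [Algebra (ZMod p) K] (hK : Fintype.card K = p ^ n) (hm : m ≠ 0) (hmn : m ∣ n) :
    ∃ E : IntermediateField (ZMod p) K, Nat.card E = p ^ m := by
  have hdvd : Module.finrank (ZMod p) (GaloisField p m) ∣ Module.finrank (ZMod p) K := by
    rw [GaloisField.finrank p hm, finrank_eq_of_card_eq_pow (n := n) (by rw [hK, ZMod.card])]
    exact hmn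
  obtain ⟨g⟩ := FiniteField.nonempty_algHom_of_finrank_dvd hdvd
  refine ⟨g.fieldRange, ?_⟩
  rw [← GaloisField.card p m hm]
  exact (Nat.card_congr (AlgEquiv.ofInjectiveField g).toEquiv).symm

theorem ne_zero_of_forall_exists_eq_pow {K : Type*} [Field K] [Fintype K]
    (hK : 2 < Fintype.card K) {g : K} (hg : ∀ x : K, x ≠ 0 → ∃ n : ℕ, x = g ^ n) : g ≠ 0 := by
  classical
  rintro rfl
  obtain ⟨x, hx⟩ := Finset.exists_mem_notMem_of_card_lt_card
    ((Finset.card_le_two (a := (0 : K)) (b := 1)).trans_lt hK)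
  rw [Finset.mem_insert, Finset.mem_singleton, not_or] at hx
  obtain ⟨n, rfl⟩ := hg x hx.2.1
  exact hx.2.1 (zero_pow fun hn => hx.2.2 (by rw [hn, pow_zero]))

end FiniteFieldTowers

section SignCharacter

theorem traceLift_trans {K E F R : Type*} [Field K] [Field E] [Field F] [Algebra K E] [Algebra E F]
    [Algebra K F] [IsScalarTower K E F] [FiniteDimensional K E] [FiniteDimensional E F]
    [CommRing R] (χ : AddChar K R) : traceLift F (traceLift E χ) = traceLift F χ := by
  ext x
  rw [traceLift_apply, traceLift_apply, traceLift_apply, Algebra.trace_trace]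

/-- The nontrivial additive character of `𝔽₂`, with values in `ℤ`. Its trace lifts are the
characters `psi`. -/
def signChar : AddChar (ZMod 2) ℤ :=
  AddChar.zmodChar 2 (ζ := -1) (by norm_num)

theorem signChar_ne_one : signChar ≠ 1 :=
  AddChar.ne_one_iff.mpr ⟨1, by decide⟩

theorem psi_eq_traceLift {K : Type*} [Field K] [Algebra (ZMod 2) K] (x : K) :
    psi K x = traceLift K signChar x := by
  rw [traceLift_apply, psi]
  generalize Algebra.trace (ZMod 2) K x = t
  revert t
  decide

theorem psiSum_eq_sum {K : Type*} [Field K] [Fintype K] [Algebra (ZMod 2) K] (c : K) (S : Set K)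
    [DecidablePred (· ∈ S)] : psiSum K c S = ∑ x with x ∈ S, traceLift K signChar (c * x) := by
  simp only [psiSum, psi_eq_traceLift]
  exact finsum_mem_eq_finite_toFinset_sum _ (Set.toFinite S) |>.trans
    (Finset.sum_congr (by ext; simp) fun _ _ => rfl)

end SignCharacter

section CyclotomicClasses

instance (s : ℕ) : NeZero (Mof s) :=
  ⟨Nat.succ_ne_zero _⟩

theorem exists_eq_val_add_mul (s : ℕ) (a : ℤ) :
    ∃ t : ℤ, a = ((a : ZMod (Mof s)).val : ℤ) + (Mof s : ℤ) * t :=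
  ⟨a / (Mof s : ℤ), by rw [ZMod.val_intCast]; exact (Int.emod_add_mul_ediv a _).symm⟩

theorem mem_Rclass {K : Type*} [Field K] {s : ℕ} {g : K} {T : Set (ZMod (Mof s))} {x : K} :
    x ∈ Rclass s g T ↔ ∃ a : ℤ, (a : ZMod (Mof s)) ∈ T ∧ x = g ^ a := by
  simp only [Rclass, Set.mem_iUnion]
  constructor
  · rintro ⟨i, hi, t, hx⟩
    refine ⟨_, ?_, hx⟩
    rwa [Int.cast_add, Int.cast_mul, Int.cast_natCast, Int.cast_natCast, ZMod.natCast_self,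
      zero_mul, add_zero, ZMod.natCast_zmod_val]
  · rintro ⟨a, ha, rfl⟩
    obtain ⟨t, ht⟩ := exists_eq_val_add_mul s a
    exact ⟨_, ha, t, by rw [← ht]⟩

end CyclotomicClasses

section RelativeTrace

open Finset

variable {E F : Type*} [Field E] [Fintype E] [Field F] [Algebra E F] {s : ℕ} {ω : F}
  (hE : Fintype.card E = 2 ^ s) (h3 : Module.finrank E F = 3)
include hE h3

theorem trFE_eq_zero_iff [Finite F] (x : F) : trFE s x = 0 ↔ Algebra.trace E F x = 0 := by
  have htrFE : trFE s x = algebraMap E F (Algebra.trace E F x) := by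
    rw [algebraMap_trace_eq_of_finrank_eq_three h3, hE, trFE, ← pow_mul, ← pow_add, two_mul]
  rw [htrFE, map_eq_zero]

theorem mem_Dset_iff [Finite F] (u : F) : u ∈ Dset F s ↔ u ≠ 0 ∧ Algebra.trace E F u⁻¹ = 0 :=
  and_congr_right fun _ => trFE_eq_zero_iff hE h3 _

theorem mem_Sa_iff [Finite F] (a : ℤ) (u : F) : u ∈ Sa s ω a ↔
    u ≠ 0 ∧ traceConic E F u = 0 ∧ Algebra.trace E F (ω ^ a * u) = 0 := by
  rw [traceConic_apply, hE, ← trFE_eq_zero_iff hE h3, ← trFE_eq_zero_iff hE h3]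
  rfl

theorem pow_Mof_eq_algebraMap_norm [Finite F] (x : F) :
    x ^ Mof s = algebraMap E F (Algebra.norm E x) := by
  rw [FiniteField.algebraMap_norm_eq_pow_sum, h3, Nat.card_eq_fintype_card, hE, Mof,
    sum_range_succ, sum_range_succ, sum_range_one, ← pow_mul]
  ring

theorem Sa_val_intCast [Finite F] (hω : ω ≠ 0) (a : ℤ) :
    Sa s ω ((a : ZMod (Mof s)).val : ℤ) = Sa s ω a := by
  obtain ⟨t, ht⟩ := exists_eq_val_add_mul s a
  have hN : Algebra.norm E ω ^ t ≠ 0 := zpow_ne_zero t (Algebra.norm_ne_zero_iff.mpr hω)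
  have hpow : ω ^ a = algebraMap E F (Algebra.norm E ω ^ t) * ω ^ ((a : ZMod (Mof s)).val : ℤ) := by
    conv_lhs => rw [ht]
    rw [zpow_add₀ hω, zpow_mul, zpow_natCast ω (Mof s), pow_Mof_eq_algebraMap_norm hE h3, map_zpow₀,
      mul_comm]
  ext u
  rw [mem_Sa_iff hE h3, mem_Sa_iff hE h3, hpow, mul_assoc, ← Algebra.smul_def, map_smul,
    smul_eq_zero_iff_right hN]

theorem ncard_Sa_add_one [Fintype F] [DecidableEq E] (a : ℤ) : (Sa s ω a).ncard + 1 =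
    #{u : F | traceConic E F u = 0 ∧ Algebra.trace E F (ω ^ a * u) = 0} := by
  classical
  rw [← card_erase_add_one (a := 0) (by simp), ← Set.ncard_coe_finset]
  congr 2
  ext u
  rw [mem_Sa_iff hE h3, mem_coe, mem_erase, mem_filter_univ]

theorem intCast_mem_T1_iff [Finite F] [CharP E 2] (hω : ω ≠ 0) (a : ℤ) :
    (a : ZMod (Mof s)) ∈ T1 s ω ↔ Algebra.trace E F (ω ^ a) = 0 := by
  classical
  have := Fintype.ofFinite F
  have hcard := ncard_Sa_add_one hE h3 (ω := ω) a
  have hq := Nat.one_le_two_pow (n := s)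
  rw [T1, Set.mem_ofPred_eq, Sa_val_intCast hE h3 hω]
  refine ⟨fun h => ?_, fun h => ?_⟩
  · by_contra htrace
    refine card_isotropic_ne_of_trace_ne_zero h3 htrace ?_
    rw [← hcard, h, hE, Nat.sub_add_cancel hq]
  · rw [card_isotropic_of_trace_eq_zero h3 (zpow_ne_zero a hω) h, hE] at hcard
    exact Nat.eq_sub_of_add_eq hcard

theorem two_pow_sub_one_mul_psiSum_Dset [Finite F] [Algebra (ZMod 2) E]
    [Algebra (ZMod 2) F] [IsScalarTower (ZMod 2) E F] (a : ℤ) :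
    ((2 : ℤ) ^ s - 1) * psiSum F (ω ^ a) (Dset F s) =
      2 ^ s * (Sa s ω a).ncard - (2 ^ (2 * s) - 1) := by
  classical
  have := Fintype.ofFinite F
  let D : Finset F := {u | u ≠ 0 ∧ Algebra.trace E F u⁻¹ = 0}
  have hcard : #D + 1 = 2 ^ (2 * s) := by
    have h := card_mul_card_ne_zero_trace_inv_eq_zero (E := E) (F := F)
    rw [Module.card_eq_pow_finrank (K := E) (V := F), h3, pow_succ', hE, ← pow_mul,
      mul_comm s] at h
    exact Nat.eq_of_mul_eq_mul_left (by positivity) h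
  have hSa : (Sa s ω a).ncard = #{u ∈ D | Algebra.traceForm E F (ω ^ a) u = 0} := by
    rw [← Set.ncard_coe_finset]
    congr 1
    ext u
    rw [mem_Sa_iff hE h3, mem_coe, mem_filter, mem_filter_univ, and_assoc]
    exact and_congr_right fun hu => and_congr_left' (traceConic_eq_zero_iff h3 hu)
  have hpsi : psiSum F (ω ^ a) (Dset F s) =
      ∑ u ∈ D, traceLift E signChar (Algebra.traceForm E F (ω ^ a) u) := by
    rw [psiSum_eq_sum, ← traceLift_trans (E := E)]
    simp only [mem_Dset_iff hE h3]
    rfl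
  have hscale : ∀ e : E, e ≠ 0 → ∀ u ∈ D, e • u ∈ D := fun e he u hu => by
    rw [mem_filter_univ] at hu ⊢
    rw [smul_inv₀, map_smul, hu.2, smul_zero]
    exact ⟨smul_ne_zero he hu.1, rfl⟩
  have hsum := card_sub_one_mul_sum_addChar (traceLift_ne_one signChar_ne_one) hscale
    (Algebra.traceForm E F (ω ^ a))
  rw [hpsi, hSa, ← Nat.cast_ofNat (R := ℤ), ← Nat.cast_pow, ← Nat.cast_pow, ← hcard, ← hE, hsum,
    Nat.cast_add_one, add_sub_cancel_right]

end RelativeTrace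

section FieldOfDegreeNine

open Finset

variable {E F H : Type*} [Field E] [Fintype E] [Field F] [Field H] [Algebra E F]
  [Algebra F H] {s : ℕ} {ω : F} {β : H}

theorem norm_eq_of_algebraMap_eq_pow [Fintype F] [Finite H] (hF : Fintype.card F = 2 ^ (3 * s))
    (h3 : Module.finrank F H = 3)
    (hω : algebraMap F H ω = β ^ (1 + 2 ^ (3 * s) + 2 ^ (6 * s))) : Algebra.norm F β = ω := by
  apply (algebraMap F H).injective
  rw [FiniteField.algebraMap_norm_eq_pow_sum, h3, Nat.card_eq_fintype_card, hF, hω,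
    sum_range_succ, sum_range_succ, sum_range_one, ← pow_mul]
  ring

variable (hE : Fintype.card E = 2 ^ s) (hEF : Module.finrank E F = 3)
include hE hEF

theorem mem_Rclass_T1_iff [Finite F] [CharP E 2] [FiniteDimensional F H] (hβ0 : β ≠ 0)
    (hβ : ∀ x : H, x ≠ 0 → ∃ n : ℕ, x = β ^ n) (hN : Algebra.norm F β = ω) (x : H) :
    x ∈ Rclass s β (T1 s ω) ↔ x ≠ 0 ∧ Algebra.trace E F (Algebra.norm F x) = 0 := by
  classical
  have hω : ω ≠ 0 := hN ▸ Algebra.norm_ne_zero_iff.mpr hβ0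
  rw [mem_Rclass]
  constructor
  · rintro ⟨n, hn, rfl⟩
    rw [Algebra.norm_zpow, hN]
    exact ⟨zpow_ne_zero n hβ0, (intCast_mem_T1_iff hE hEF hω n).mp hn⟩
  · rintro ⟨hx, htrace⟩
    obtain ⟨n, rfl⟩ := hβ x hx
    rw [map_pow, hN, ← zpow_natCast] at htrace
    exact ⟨n, (intCast_mem_T1_iff hE hEF hω n).mpr htrace, (zpow_natCast β n).symm⟩

theorem two_pow_mul_one_add_psiSum_Rclass_T1 [Finite F] [Finite H] [Algebra (ZMod 2) E]
    [Algebra (ZMod 2) F] [Algebra (ZMod 2) H] [IsScalarTower (ZMod 2) E F]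
    [IsScalarTower (ZMod 2) F H]
    (hFH : Module.finrank F H = 3) (hβ0 : β ≠ 0) (hβ : ∀ x : H, x ≠ 0 → ∃ n : ℕ, x = β ^ n)
    (hN : Algebra.norm F β = ω) (a : ℤ) :
    (2 : ℤ) ^ s * (1 + psiSum H (β ^ a) (Rclass s β (T1 s ω))) =
      2 ^ (3 * s) * (1 + 2 ^ s * psiSum F (ω ^ a) (Dset F s)) := by
  classical
  have := Fintype.ofFinite F
  have := Fintype.ofFinite H
  have : CharP E 2 := charP_of_injective_algebraMap' (ZMod 2) 2
  have hF : Fintype.card F = 2 ^ (3 * s) := by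
    rw [Module.card_eq_pow_finrank (K := E), hEF, hE, ← pow_mul, mul_comm]
  have hD : psiSum F (ω ^ a) (Dset F s) = ∑ u : F with u ≠ 0 ∧ Algebra.trace E F u⁻¹ = 0,
      traceLift F (traceLift E signChar) (ω ^ a * u) := by
    simp only [psiSum_eq_sum, traceLift_trans, mem_Dset_iff hE hEF]
  have hR : 1 + psiSum H (β ^ a) (Rclass s β (T1 s ω)) =
      ∑ x : H with Algebra.trace E F (Algebra.norm F x) = 0,
        traceLift H (traceLift F (traceLift E signChar)) (β ^ a * x) := by
    rw [← add_sum_erase _ _ (a := 0) (by simp), mul_zero, AddChar.map_zero_eq_one, psiSum_eq_sum,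
      traceLift_trans (E := E) (F := F), traceLift_trans]
    congr 2
    ext x
    rw [mem_filter_univ, mem_Rclass_T1_iff hE hEF hβ0 hβ hN, mem_erase, mem_filter_univ]
  have hsum := card_mul_sum_traceLift_norm hFH (traceLift_ne_one signChar_ne_one (F := E))
    (zpow_ne_zero a hβ0)
  rw [← hR, Algebra.norm_zpow, hN, ← hD, hE, hF] at hsum
  exact_mod_cast hsum

end FieldOfDegreeNine

section CharacterValues

variable {F H : Type*} [Field F] [Fintype F] [Algebra (ZMod 2) F] [Field H] [Fintype H]
  [Algebra (ZMod 2) H] {s : ℕ} {ω : F} {β : H}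

theorem exists_intermediateField_card_eq_and_finrank_eq_three (hs : s ≠ 0)
    (hF : Fintype.card F = 2 ^ (3 * s)) :
    ∃ E : IntermediateField (ZMod 2) F, Nat.card E = 2 ^ s ∧ Module.finrank E F = 3 := by
  obtain ⟨E, hE⟩ := exists_intermediateField_card_eq_pow hF hs (dvd_mul_left s 3)
  have := Fintype.ofFinite E
  refine ⟨E, hE, finrank_eq_of_card_eq_pow ?_⟩
  rw [hF, ← Nat.card_eq_fintype_card, hE, ← pow_mul, mul_comm]

theorem psiSum_Dset_eq (hs : s ≠ 0) (hF : Fintype.card F = 2 ^ (3 * s)) (hω : ω ≠ 0) {a : ℤ} {k : ℕ}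
    (hk : (Sa s ω ((a : ZMod (Mof s)).val : ℤ)).ncard = k * (2 ^ s - 1)) :
    psiSum F (ω ^ a) (Dset F s) = 2 ^ s * k - (2 ^ s + 1) := by
  classical
  obtain ⟨E, hE, h3⟩ := exists_intermediateField_card_eq_and_finrank_eq_three hs hF
  have := Fintype.ofFinite E
  rw [Nat.card_eq_fintype_card] at hE
  have hsum := two_pow_sub_one_mul_psiSum_Dset hE h3 (ω := ω) a
  rw [Sa_val_intCast hE h3 hω] at hk
  rw [hk, Nat.cast_mul, Nat.cast_pred (by positivity), Nat.cast_pow, Nat.cast_ofNat, mul_comm 2 s,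
    pow_mul] at hsum
  have hq : (2 : ℤ) ^ s - 1 ≠ 0 := sub_ne_zero.mpr (one_lt_pow₀ one_lt_two hs).ne'
  apply mul_left_cancel₀ hq
  rw [hsum]
  ring

theorem psiSum_Rclass_T1_eq (hs : s ≠ 0) (hF : Fintype.card F = 2 ^ (3 * s))
    (hH : Fintype.card H = 2 ^ (9 * s)) (f : F →+* H) (hβ0 : β ≠ 0)
    (hβ : ∀ x : H, x ≠ 0 → ∃ n : ℕ, x = β ^ n)
    (hω : f ω = β ^ (1 + 2 ^ (3 * s) + 2 ^ (6 * s))) (a : ℤ) :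
    psiSum H (β ^ a) (Rclass s β (T1 s ω)) =
      2 ^ (2 * s) - 1 + 2 ^ (3 * s) * psiSum F (ω ^ a) (Dset F s) := by
  algebraize [f]
  have : IsScalarTower (ZMod 2) F H := .of_algebraMap_eq' (Subsingleton.elim _ _)
  have hFH : Module.finrank F H = 3 := finrank_eq_of_card_eq_pow (by rw [hF, hH, ← pow_mul]; ring)
  obtain ⟨E, hE, hEF⟩ := exists_intermediateField_card_eq_and_finrank_eq_three hs hF
  have := Fintype.ofFinite E
  rw [Nat.card_eq_fintype_card] at hE
  have hsum := two_pow_mul_one_add_psiSum_Rclass_T1 hE hEF hFH hβ0 hβ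
    (norm_eq_of_algebraMap_eq_pow hF hFH hω) a
  apply mul_left_cancel₀ (pow_ne_zero s (two_ne_zero (α := ℤ)))
  linear_combination hsum

end CharacterValues

theorem statement17 (s : ℕ) (hs : 1 ≤ s) (F H : Type*) [Field F] [Fintype F] [Algebra (ZMod 2) F]
    [Field H] [Fintype H] [Algebra (ZMod 2) H]
    (hF : Fintype.card F = 2 ^ (3 * s)) (hH : Fintype.card H = 2 ^ (9 * s))
    (f : F →+* H) (β : H) (hβ : ∀ x : H, x ≠ 0 → ∃ n : ℕ, x = β ^ n)
    (ω : F) (hω : f ω = β ^ (1 + 2 ^ (3 * s) + 2 ^ (6 * s)))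
    (hωgen : ∀ x : F, x ≠ 0 → ∃ n : ℕ, x = ω ^ n) :
    ∀ a : ℤ,
      psiSum H (β ^ a) (Rclass s β (T1 s ω)) =
        2 ^ (2 * s) - 1 + 2 ^ (3 * s) * psiSum F (ω ^ a) (Dset F s) ∧
      ((a : ZMod (Mof s)) ∈ T1 s ω →
        psiSum H (β ^ a) (Rclass s β (T1 s ω)) = -(2 ^ (3 * s)) + 2 ^ (2 * s) - 1) ∧
      ((a : ZMod (Mof s)) ∈ T2 s ω →
        psiSum H (β ^ a) (Rclass s β (T1 s ω)) = 2 ^ (3 * s) * (2 ^ s - 1) + 2 ^ (2 * s) - 1) ∧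
      ((a : ZMod (Mof s)) ∈ T3 s ω →
        psiSum H (β ^ a) (Rclass s β (T1 s ω)) = -((2 ^ s + 1) * (2 ^ (3 * s) - 2 ^ s + 1))) := by
  intro a
  have hs0 : s ≠ 0 := Nat.one_le_iff_ne_zero.mp hs
  have hβ0 : β ≠ 0 := ne_zero_of_forall_exists_eq_pow
    (hH ▸ (lt_self_pow₀ one_lt_two (by lia))) hβ
  have hω0 : ω ≠ 0 := by
    rintro rfl
    exact pow_ne_zero _ hβ0 (hω.symm.trans (map_zero f))
  have hR := psiSum_Rclass_T1_eq hs0 hF hH f hβ0 hβ hω a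
  refine ⟨hR, fun ha => ?_, fun ha => ?_, fun ha => ?_⟩
  · rw [hR, psiSum_Dset_eq hs0 hF hω0 (k := 1) (ha.trans (one_mul _).symm)]
    ring
  · rw [hR, psiSum_Dset_eq hs0 hF hω0 (k := 2) ha]
    ring
  · rw [hR, psiSum_Dset_eq hs0 hF hω0 (k := 0) (ha.trans (zero_mul _).symm)]
    ring
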